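/- arXiv:1504.00354 — 2 statements merged into one kernel-verified Lean document; each statement's English description precedes it below -/
import Mathlib

section
/- For a homogeneous effect algebra E, the set E_S of all sharp elements of E is a sub-effect algebra of E; moreover, E_S (with the restricted operation) is an orthoalgebra, i.e. a ⊥ a implies a = 0 in E_S. -/
/-- An effect algebra: a partial commutative, associative operation `oplus`
(with definedness encoded via `Option`), constants `zero` and `one`,
unique orthosupplements, and `a ⊕ 1` defined only for `a = 0`. -/
structure EffectAlgebra (E : Type*) where
  oplus : E → E → Option E
  zero : E
  one : E
  comm : ∀ a b, oplus a b = oplus b a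
  assoc : ∀ a b c ab abc, oplus a b = some ab → oplus ab c = some abc →
    ∃ bc, oplus b c = some bc ∧ oplus a bc = some abc
  compl_exists : ∀ a, ∃ b, oplus a b = some one
  compl_unique : ∀ a b c, oplus a b = some one → oplus a c = some one → b = c
  add_one : ∀ a b, oplus a one = some b → a = zero

namespace EffectAlgebra

variable {E : Type*} (A : EffectAlgebra E)

/-- `a ⊥ b` : the sum `a ⊕ b` is defined. -/
def Perp (a b : E) : Prop := (A.oplus a b).isSome

/-- `a ≤ b` iff `b = a ⊕ c` for some `c`. -/
def le (a b : E) : Prop := ∃ c, A.oplus a c = some b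

/-- The orthosupplement `a'`: the unique `b` with `a ⊕ b = 1`. -/
noncomputable def compl (a : E) : E :=
  @Classical.epsilon E ⟨A.zero⟩ fun b => A.oplus a b = some A.one

/-- `a ⊖ b` : the unique `c` with `b ⊕ c = a` (defined when `b ≤ a`). -/
noncomputable def ominus (a b : E) : E :=
  @Classical.epsilon E ⟨A.zero⟩ fun c => A.oplus b c = some a

/-- Homogeneity. -/
def Homogeneous : Prop :=
  ∀ u v₁ v₂ s, A.oplus v₁ v₂ = some s → A.le u s → A.le u (A.compl s) →
    ∃ u₁ u₂, A.le u₁ v₁ ∧ A.le u₂ v₂ ∧ A.oplus u₁ u₂ = some u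

/-- Riesz decomposition property. -/
def RDP : Prop :=
  ∀ u v₁ v₂ s, A.oplus v₁ v₂ = some s → A.le u s →
    ∃ u₁ u₂, A.le u₁ v₁ ∧ A.le u₂ v₂ ∧ A.oplus u₁ u₂ = some u

/-- The sum `c₁ ⊕ … ⊕ cₙ` of a finite family (a list); `some s` iff the family
is orthogonal with sum `s`. -/
def sumList : List E → Option E
  | [] => some A.zero
  | x :: xs => (sumList xs).bind fun s => A.oplus x s

/-- The subfamily of `C` indexed by a set of indices `S ⊆ {1,…,n}`. -/
def pickList (C : List E) (S : Finset (Fin C.length)) : List E :=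
  (S.sort (· ≤ ·)).map C.get

/-- `C` is an orthogonal cover of `M`. -/
def IsCoverOf (C : List E) (M : Set E) : Prop :=
  (A.sumList C).isSome ∧
    ∀ a ∈ M, ∃ S : Finset (Fin C.length), A.sumList (pickList C S) = some a

/-- `M` is compatible with covers in `X`: every finite subset of `M` has an
orthogonal cover with range contained in `X`. -/
def CompatWithCoversIn (M X : Set E) : Prop :=
  ∀ F : Finset E, ↑F ⊆ M →
    ∃ C : List E, (∀ c ∈ C, c ∈ X) ∧ A.IsCoverOf C ↑F

/-- `M` is compatible (with covers in `E`). -/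
def Compatible (M : Set E) : Prop := A.CompatWithCoversIn M Set.univ

/-- `M` is internally compatible. -/
def InternallyCompatible (M : Set E) : Prop := A.CompatWithCoversIn M M

/-- `D` is a refinement of `C`: a partition `{P i}` of the index set of `D`
with `C i = ⊕_{j ∈ P i} D j`. -/
def IsRefinement (D C : List E) : Prop :=
  ∃ P : Fin C.length → Finset (Fin D.length),
    (∀ i j, i ≠ j → Disjoint (P i) (P j)) ∧
    (∀ k, ∃ i, k ∈ P i) ∧
    (∀ i, A.sumList (pickList D (P i)) = some (C.get i))

/-- One step of the closure construction `M ↦ M₁`. -/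
def closureStep (M : Set E) : Set E :=
  {x | ∃ y ∈ M, A.le x y ∧ A.le x (A.compl y)} ∪
  {z | ∃ y ∈ M, ∃ x, A.le x y ∧ A.le x (A.compl y) ∧ A.oplus x z = some y}

/-- The sets `Mₙ`. -/
def closureSeq (M : Set E) (n : ℕ) : Set E := (A.closureStep)^[n] M

/-- The closure `M̄ = ⋃ₙ Mₙ`. -/
def closure (M : Set E) : Set E := ⋃ n, A.closureSeq M n

/-- `B` is a sub-effect algebra of `E`. -/
def IsSubEA (B : Set E) : Prop :=
  A.one ∈ B ∧ ∀ a ∈ B, ∀ b ∈ B, A.le b a → A.ominus a b ∈ B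

/-- The Riesz decomposition property for (the effect algebra on) a subset `B`. -/
def RDPOn (B : Set E) : Prop :=
  ∀ u v₁ v₂ s, u ∈ B → v₁ ∈ B → v₂ ∈ B → A.oplus v₁ v₂ = some s → A.le u s →
    ∃ u₁ u₂, u₁ ∈ B ∧ u₂ ∈ B ∧ A.le u₁ v₁ ∧ A.le u₂ v₂ ∧ A.oplus u₁ u₂ = some u

/-- Homogeneity for (the effect algebra on) a subset `B`. -/
def HomogeneousOn (B : Set E) : Prop :=
  ∀ u v₁ v₂ s, u ∈ B → v₁ ∈ B → v₂ ∈ B → A.oplus v₁ v₂ = some s →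
    A.le u s → A.le u (A.compl s) →
    ∃ u₁ u₂, u₁ ∈ B ∧ u₂ ∈ B ∧ A.le u₁ v₁ ∧ A.le u₂ v₂ ∧ A.oplus u₁ u₂ = some u

/-- A block: a maximal sub-effect algebra satisfying the Riesz decomposition
property. -/
def IsBlock (B : Set E) : Prop :=
  A.IsSubEA B ∧ A.RDPOn B ∧
    ∀ B', A.IsSubEA B' → A.RDPOn B' → B ⊆ B' → B' = B

/-- A block of the sub-effect algebra on `F`: a maximal sub-effect algebra of
`F` satisfying the Riesz decomposition property. -/
def IsBlockIn (F B : Set E) : Prop :=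
  B ⊆ F ∧ A.IsSubEA B ∧ A.RDPOn B ∧
    ∀ B', B' ⊆ F → A.IsSubEA B' → A.RDPOn B' → B ⊆ B' → B' = B

/-- `a` is sharp: the infimum `a ∧ a'` exists and equals `0`, i.e. every common
lower bound of `a` and `a'` is `0`. -/
def Sharp (a : E) : Prop :=
  ∀ b, A.le b a → A.le b (A.compl a) → b = A.zero

/-- `a` is sharp in the sub-effect algebra on `F`. -/
def SharpIn (F : Set E) (a : E) : Prop :=
  a ∈ F ∧ ∀ b ∈ F, A.le b a → A.le b (A.compl a) → b = A.zero

/-- `a` is principal. -/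
def Principal (a : E) : Prop :=
  ∀ x y s, A.le x a → A.le y a → A.oplus x y = some s → A.le s a

/-- `a` is principal in the sub-effect algebra on `B`. -/
def PrincipalIn (B : Set E) (a : E) : Prop :=
  a ∈ B ∧ ∀ x ∈ B, ∀ y ∈ B, ∀ s, A.le x a → A.le y a →
    A.oplus x y = some s → A.le s a

/-- `a` is central: principal, and every `b` has a unique decomposition
`b = b₁ ⊕ b₂` with `b₁ ≤ a`, `b₂ ≤ a'`. -/
def Central (a : E) : Prop :=
  A.Principal a ∧ ∀ b, ∃! p : E × E,
    A.le p.1 a ∧ A.le p.2 (A.compl a) ∧ A.oplus p.1 p.2 = some b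

/-- `a` is central in the sub-effect algebra on `B`. -/
def CentralIn (B : Set E) (a : E) : Prop :=
  A.PrincipalIn B a ∧ ∀ b ∈ B, ∃! p : E × E,
    p.1 ∈ B ∧ p.2 ∈ B ∧ A.le p.1 a ∧ A.le p.2 (A.compl a) ∧
      A.oplus p.1 p.2 = some b

/-- The center `C(E)`. -/
def center : Set E := {a | A.Central a}

/-- The compatibility center `K(E)`: the intersection of all blocks. -/
def compatCenter : Set E := {x | ∀ B, A.IsBlock B → x ∈ B}

end EffectAlgebra

/-!
Since `a ⊖ b = (b ⊕ a')'` and sharpness is invariant under `'`, closure of the sharp elements under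
`⊖` reduces to closure under `⊕`. If `v`, `w` are sharp and `u ≤ v ⊕ w`, `u ≤ (v ⊕ w)'`, then
homogeneity gives `u = u₁ ⊕ u₂` with `u₁ ≤ v` and `u₂ ≤ w`. As `u` is orthogonal to `v ⊕ w`, also
`u₁ ⊥ v` and `u₂ ⊥ w`, so both summands vanish.
-/

namespace EffectAlgebra

section Basic

variable {E : Type*} (A : EffectAlgebra E)

theorem oplus_compl (a : E) : A.oplus a (A.compl a) = some A.one :=
  Classical.epsilon_spec (A.compl_exists a)

theorem compl_oplus (a : E) : A.oplus (A.compl a) a = some A.one :=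
  (A.comm _ _).trans (A.oplus_compl a)

theorem oplus_ominus {a b : E} (hba : A.le b a) : A.oplus b (A.ominus a b) = some a :=
  Classical.epsilon_spec hba

theorem compl_eq_of_oplus_eq_one {a b : E} (hab : A.oplus a b = some A.one) : A.compl a = b :=
  A.compl_unique a _ _ (A.oplus_compl a) hab

protected theorem compl_compl (a : E) : A.compl (A.compl a) = a :=
  A.compl_eq_of_oplus_eq_one (A.compl_oplus a)

protected theorem compl_one : A.compl A.one = A.zero :=
  A.add_one _ _ (A.compl_oplus A.one)

theorem oplus_zero (a : E) : A.oplus a A.zero = some a := by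
  have one_oplus_zero : A.oplus A.one A.zero = some A.one := A.compl_one ▸ A.oplus_compl A.one
  obtain ⟨b, hb, compl_oplus_b⟩ := A.assoc _ _ _ _ _ (A.compl_oplus a) one_oplus_zero
  rw [hb, A.compl_unique _ _ _ compl_oplus_b (A.compl_oplus a)]

protected theorem le_refl (a : E) : A.le a a :=
  ⟨A.zero, A.oplus_zero a⟩

theorem le_of_oplus_left {a b s : E} (hs : A.oplus a b = some s) : A.le a s :=
  ⟨b, hs⟩

theorem le_of_oplus_right {a b s : E} (hs : A.oplus a b = some s) : A.le b s :=
  ⟨a, (A.comm _ _).trans hs⟩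

theorem oplus_compl_eq_compl_ominus {a b : E} (hba : A.le b a) :
    A.oplus b (A.compl a) = some (A.compl (A.ominus a b)) := by
  have ominus_oplus : A.oplus (A.ominus a b) b = some a := (A.comm _ _).trans (A.oplus_ominus hba)
  obtain ⟨c, hc, ominus_oplus_c⟩ := A.assoc _ _ _ _ _ ominus_oplus (A.oplus_compl a)
  rw [hc, A.compl_eq_of_oplus_eq_one ominus_oplus_c]

end Basic

section Perp

variable {E : Type*} {A : EffectAlgebra E} {a b c d : E}

theorem perp_of_oplus_eq {s : E} (hs : A.oplus a b = some s) : A.Perp a b :=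
  Option.isSome_of_eq_some hs

theorem Perp.symm (hab : A.Perp a b) : A.Perp b a := by
  rwa [Perp, A.comm]

theorem Perp.mono_left (hbc : A.Perp b c) (hab : A.le a b) : A.Perp a c := by
  obtain ⟨x, hx⟩ := hab
  obtain ⟨s, hs⟩ := Option.isSome_iff_exists.mp hbc
  obtain ⟨t, ht, -⟩ := A.assoc _ _ _ _ _ ((A.comm x a).trans hx) hs
  exact perp_of_oplus_eq ht

theorem Perp.mono (hbd : A.Perp b d) (hab : A.le a b) (hcd : A.le c d) : A.Perp a c :=
  ((hbd.mono_left hab).symm.mono_left hcd).symm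

theorem perp_iff_le_compl : A.Perp a b ↔ A.le a (A.compl b) := by
  refine ⟨fun hab => ?_, (perp_of_oplus_eq (A.compl_oplus b)).mono_left⟩
  obtain ⟨s, hs⟩ := Option.isSome_iff_exists.mp hab.symm
  obtain ⟨x, hx, b_oplus_x⟩ := A.assoc _ _ _ _ _ hs (A.oplus_compl s)
  rw [A.compl_eq_of_oplus_eq_one b_oplus_x]
  exact A.le_of_oplus_left hx

end Perp

section Sharp

variable {E : Type*} {A : EffectAlgebra E} {a b : E}

theorem Sharp.eq_zero_of_le_of_perp (ha : A.Sharp a) (hba : A.le b a) (hperp : A.Perp b a) :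
    b = A.zero :=
  ha b hba (perp_iff_le_compl.mp hperp)

theorem Sharp.eq_zero_of_perp_self (ha : A.Sharp a) (haa : A.Perp a a) : a = A.zero :=
  ha.eq_zero_of_le_of_perp (A.le_refl a) haa

theorem sharp_one (A : EffectAlgebra E) : A.Sharp A.one := by
  intro b _ hb
  obtain ⟨s, hs⟩ := Option.isSome_iff_exists.mp (perp_iff_le_compl.mpr hb)
  exact A.add_one b s hs

theorem Sharp.compl (ha : A.Sharp a) : A.Sharp (A.compl a) := by
  intro b hb hb'
  rw [A.compl_compl] at hb'
  exact ha b hb' hb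

theorem sharp_compl_iff : A.Sharp (A.compl a) ↔ A.Sharp a :=
  ⟨fun ha => A.compl_compl a ▸ ha.compl, Sharp.compl⟩

theorem Homogeneous.sharp_oplus (hA : A.Homogeneous) {v w s : E} (hv : A.Sharp v)
    (hw : A.Sharp w) (hs : A.oplus v w = some s) : A.Sharp s := by
  intro u hus hus'
  obtain ⟨u₁, u₂, hu₁v, hu₂w, hu⟩ := hA u v w s hs hus hus'
  have u_perp_s : A.Perp u s := perp_iff_le_compl.mpr hus'
  have u₁_eq_zero : u₁ = A.zero := hv.eq_zero_of_le_of_perp hu₁v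
    (u_perp_s.mono (A.le_of_oplus_left hu) (A.le_of_oplus_left hs))
  have u₂_eq_zero : u₂ = A.zero := hw.eq_zero_of_le_of_perp hu₂w
    (u_perp_s.mono (A.le_of_oplus_right hu) (A.le_of_oplus_right hs))
  rw [u₁_eq_zero, u₂_eq_zero, A.oplus_zero] at hu
  exact (Option.some.inj hu).symm

theorem Homogeneous.sharp_ominus (hA : A.Homogeneous) (ha : A.Sharp a) (hb : A.Sharp b)
    (hba : A.le b a) : A.Sharp (A.ominus a b) :=
  sharp_compl_iff.mp (hA.sharp_oplus hb ha.compl (A.oplus_compl_eq_compl_ominus hba))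

theorem Homogeneous.isSubEA_setOf_sharp (hA : A.Homogeneous) : A.IsSubEA {a | A.Sharp a} :=
  ⟨A.sharp_one, fun _ ha _ hb hba => hA.sharp_ominus ha hb hba⟩

end Sharp

end EffectAlgebra

/-- In a homogeneous effect algebra, the sharp elements form a
sub-effect algebra which is an orthoalgebra. -/
theorem sharp_elements_subalgebra_orthoalgebra {E : Type*}
    (A : EffectAlgebra E) (hH : A.Homogeneous) :
    A.IsSubEA {a | A.Sharp a} ∧
      ∀ a : E, A.Sharp a → A.Perp a a → a = A.zero :=
  ⟨hH.isSubEA_setOf_sharp, fun _ ha haa => ha.eq_zero_of_perp_self haa⟩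
end

section
/- Let H be a complex Hilbert space with dim(H) > 1. Then the standard effect algebra E(H) is not homogeneous; concretely, there exist self-adjoint bounded operators u, v₁, v₂ on H with 0 ≤ v₁, 0 ≤ v₂, v₁ + v₂ ≤ I, 0 ≤ u ≤ v₁ + v₂ and u + v₁ + v₂ ≤ I (i.e. u ≤ I − (v₁ + v₂)), such that there are no self-adjoint operators u₁, u₂ with 0 ≤ u₁ ≤ v₁, 0 ≤ u₂ ≤ v₂ and u = u₁ + u₂. -/
/-!
Let `e`, `f` be orthonormal, and write `P x = ⟪x, ·⟫ x`. Take `v₁ = ½ P e`, `v₂ = ½ P f` and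
`u = ¼ P (e + f)`, half the projection onto the diagonal of the plane spanned by `e` and `f`.
By the parallelogram law `v₁ + v₂ - u = ¼ P (e - f) ≥ 0`, and so `u + (v₁ + v₂) ≤ P e + P f`,
which is at most `1` by Bessel's inequality. If `0 ≤ u₁ ≤ v₁` and `0 ≤ u₂ ≤ v₂`, then
`u₁` kills `f` and `u₂` kills `e`, because a positive operator whose quadratic form vanishes at a
vector annihilates it. Hence `⟪(u₁ + u₂) f, e⟫ = ⟪f, u₂ e⟫ = 0`, whereas `⟪u f, e⟫ = ¼`.
-/

open InnerProductSpace RCLike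
open scoped ComplexOrder InnerProductSpace

section PositiveOperators

variable {𝕜 E : Type*} [RCLike 𝕜] [NormedAddCommGroup E] [InnerProductSpace 𝕜 E]

theorem norm_inner_map_sq_le_of_isPositive {T : E →ₗ[𝕜] E} (hT : T.IsPositive) (x y : E) :
    ‖⟪T x, y⟫_𝕜‖ ^ 2 ≤ re ⟪T x, x⟫_𝕜 * re ⟪T y, y⟫_𝕜 := by
  let semiInner : PreInnerProductSpace.Core 𝕜 E :=
    { inner x y := ⟪T x, y⟫_𝕜
      conj_inner_symm x y := by rw [inner_conj_symm, hT.isSymmetric]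
      re_inner_nonneg := hT.re_inner_nonneg_left
      add_left x y z := by rw [map_add, inner_add_left]
      smul_left x y r := by rw [map_smul, inner_smul_left] }
  have cauchy_schwarz : ‖⟪T x, y⟫_𝕜‖ * ‖⟪T y, x⟫_𝕜‖ ≤ re ⟪T x, x⟫_𝕜 * re ⟪T y, y⟫_𝕜 :=
    InnerProductSpace.Core.inner_mul_inner_self_le (c := semiInner) x y
  rwa [hT.isSymmetric y x, norm_inner_symm y, ← sq] at cauchy_schwarz

theorem map_eq_zero_of_re_inner_map_self_nonpos {T : E →ₗ[𝕜] E} (hT : T.IsPositive) {x : E}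
    (hx : re ⟪T x, x⟫_𝕜 ≤ 0) : T x = 0 := by
  have form_eq_zero : re ⟪T x, x⟫_𝕜 = 0 := hx.antisymm (hT.re_inner_nonneg_left x)
  have inner_sq_le := norm_inner_map_sq_le_of_isPositive hT x (T x)
  rw [form_eq_zero, zero_mul] at inner_sq_le
  exact inner_self_eq_zero.mp (norm_eq_zero.mp (sq_nonpos_iff _ |>.mp inner_sq_le))

theorem map_eq_zero_of_isPositive_sub {u v : E →ₗ[𝕜] E} (hu : u.IsPositive)
    (huv : (v - u).IsPositive) {x : E} (hx : v x = 0) : u x = 0 := by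
  refine map_eq_zero_of_re_inner_map_self_nonpos hu ?_
  simpa [hx] using huv.re_inner_nonneg_left x

theorem inner_map_add_map_eq_zero {u₁ u₂ v₁ v₂ : E →ₗ[𝕜] E}
    (hu₁ : u₁.IsPositive) (huv₁ : (v₁ - u₁).IsPositive)
    (hu₂ : u₂.IsPositive) (huv₂ : (v₂ - u₂).IsPositive)
    {x y : E} (hx : v₁ x = 0) (hy : v₂ y = 0) : ⟪u₁ x + u₂ x, y⟫_𝕜 = 0 := by
  rw [map_eq_zero_of_isPositive_sub hu₁ huv₁ hx, zero_add, hu₂.isSymmetric x y,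
    map_eq_zero_of_isPositive_sub hu₂ huv₂ hy, inner_zero_right]

end PositiveOperators

section RankOne

variable {𝕜 E : Type*} [RCLike 𝕜]

section Seminormed

variable [SeminormedAddCommGroup E] [InnerProductSpace 𝕜 E]

theorem re_inner_rankOne_self_apply_self (x y : E) :
    re ⟪rankOne 𝕜 x x y, y⟫_𝕜 = ‖⟪x, y⟫_𝕜‖ ^ 2 := by
  rw [inner_left_rankOne_apply, inner_mul_symm_re_eq_norm, norm_mul, norm_inner_symm y, sq]

theorem rankOne_add_self_add_rankOne_sub_self (x y : E) :
    rankOne 𝕜 (x + y) (x + y) + rankOne 𝕜 (x - y) (x - y) =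
      (2 : 𝕜) • (rankOne 𝕜 x x + rankOne 𝕜 y y) := by
  simp only [map_add, map_sub, add_apply, sub_apply]
  module

end Seminormed

variable [NormedAddCommGroup E] [InnerProductSpace 𝕜 E]

theorem isPositive_one_sub_sum_rankOne {ι : Type*} {v : ι → E} (hv : Orthonormal 𝕜 v)
    (s : Finset ι) : (1 - ∑ i ∈ s, rankOne 𝕜 (v i) (v i)).IsPositive := by
  refine ContinuousLinearMap.isPositive_def.mpr ⟨?_, fun x ↦ ?_⟩
  · exact ContinuousLinearMap.isPositive_one.isSymmetric.sub
      (ContinuousLinearMap.isPositive_sum s fun i _ ↦ isPositive_rankOne_self (v i)).isSymmetric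
  · have form_eq : re ⟪(1 - ∑ i ∈ s, rankOne 𝕜 (v i) (v i)) x, x⟫_𝕜 =
        ‖x‖ ^ 2 - ∑ i ∈ s, ‖⟪v i, x⟫_𝕜‖ ^ 2 := by
      simp only [sub_apply, one_apply_eq_self, sum_apply, inner_sub_left, sum_inner, map_sub,
        map_sum, re_inner_rankOne_self_apply_self, inner_self_eq_norm_sq]
    rw [ContinuousLinearMap.reApplyInnerSelf_apply, form_eq]
    exact sub_nonneg.mpr (hv.sum_inner_products_le x)

theorem isPositive_half_add_half_sub_quarter_rankOne (x y : E) :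
    ((1 / 2 : 𝕜) • rankOne 𝕜 x x + (1 / 2 : 𝕜) • rankOne 𝕜 y y -
      (1 / 4 : 𝕜) • rankOne 𝕜 (x + y) (x + y)).IsPositive := by
  have sub_eq : (1 / 2 : 𝕜) • rankOne 𝕜 x x + (1 / 2 : 𝕜) • rankOne 𝕜 y y -
      (1 / 4 : 𝕜) • rankOne 𝕜 (x + y) (x + y) = (1 / 4 : 𝕜) • rankOne 𝕜 (x - y) (x - y) := by
    linear_combination (norm := module)
      (-1 / 4 : 𝕜) • rankOne_add_self_add_rankOne_sub_self (𝕜 := 𝕜) x y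
  rw [sub_eq]
  exact (isPositive_rankOne_self (x - y)).smul_of_nonneg (by positivity)

theorem smul_rankOne_add_ne_add_of_isPositive_sub {x y : E} (hx : x ≠ 0) (hy : y ≠ 0)
    (hxy : ⟪x, y⟫_𝕜 = 0) {a b c : 𝕜} (hc : c ≠ 0) {u₁ u₂ : E →L[𝕜] E}
    (hu₁ : u₁.IsPositive) (huv₁ : (a • rankOne 𝕜 x x - u₁).IsPositive)
    (hu₂ : u₂.IsPositive) (huv₂ : (b • rankOne 𝕜 y y - u₂).IsPositive) :
    c • rankOne 𝕜 (x + y) (x + y) ≠ u₁ + u₂ := by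
  intro h
  have hyx : ⟪y, x⟫_𝕜 = 0 := inner_eq_zero_symm.mp hxy
  have inner_eq_zero : ⟪(u₁ + u₂) y, x⟫_𝕜 = 0 :=
    inner_map_add_map_eq_zero hu₁ huv₁ hu₂ huv₂ (by simp [hxy]) (by simp [hyx])
  rw [← h] at inner_eq_zero
  simp [inner_add_left, inner_smul_left, hxy, hyx, hx, hy, hc] at inner_eq_zero

end RankOne

theorem exists_orthonormal_of_le_rank {𝕜 E : Type*} [RCLike 𝕜] [NormedAddCommGroup E]
    [InnerProductSpace 𝕜 E] {n : ℕ} (hn : n ≤ Module.rank 𝕜 E) :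
    ∃ v : Fin n → E, Orthonormal 𝕜 v := by
  obtain ⟨f, hf⟩ := Module.le_rank_iff_exists_linearMap.mp hn
  have linearIndependent_f := (Pi.basisFun 𝕜 (Fin n)).linearIndependent.map' f
    (LinearMap.ker_eq_bot.mpr hf)
  exact ⟨_, gramSchmidtNormed_orthonormal linearIndependent_f⟩

theorem effects_not_homogeneous_general {𝕜 E : Type*} [RCLike 𝕜] [NormedAddCommGroup E]
    [InnerProductSpace 𝕜 E] (hdim : 1 < Module.rank 𝕜 E) :
    ∃ u v₁ v₂ : E →L[𝕜] E,
      v₁.IsPositive ∧ v₂.IsPositive ∧ (1 - (v₁ + v₂)).IsPositive ∧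
      u.IsPositive ∧ ((v₁ + v₂) - u).IsPositive ∧
      (1 - (u + (v₁ + v₂))).IsPositive ∧
      ¬ ∃ u₁ u₂ : E →L[𝕜] E, u₁.IsPositive ∧ (v₁ - u₁).IsPositive ∧
          u₂.IsPositive ∧ (v₂ - u₂).IsPositive ∧ u = u₁ + u₂ := by
  have two_le_rank : ((2 : ℕ) : Cardinal) ≤ Module.rank 𝕜 E := by
    exact_mod_cast Order.succ_le_of_lt hdim
  obtain ⟨b, hb⟩ := exists_orthonormal_of_le_rank two_le_rank
  let P (i : Fin 2) : E →L[𝕜] E := rankOne 𝕜 (b i) (b i)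
  let u : E →L[𝕜] E := (1 / 4 : 𝕜) • rankOne 𝕜 (b 0 + b 1) (b 0 + b 1)
  let v (i : Fin 2) : E →L[𝕜] E := (1 / 2 : 𝕜) • P i
  have hu : u.IsPositive := (isPositive_rankOne_self _).smul_of_nonneg (by positivity)
  have hv (i) : (v i).IsPositive := (isPositive_rankOne_self _).smul_of_nonneg (by positivity)
  have huv : (v 0 + v 1 - u).IsPositive :=
    isPositive_half_add_half_sub_quarter_rankOne (b 0) (b 1)
  have bessel : (1 - (P 0 + P 1)).IsPositive := by
    simpa only [Fin.sum_univ_two] using isPositive_one_sub_sum_rankOne hb Finset.univ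
  have one_sub_v : 1 - (v 0 + v 1) = (1 - (P 0 + P 1)) + (v 0 + v 1) := by module
  have one_sub_uv : 1 - (u + (v 0 + v 1)) = (1 - (P 0 + P 1)) + (v 0 + v 1 - u) := by module
  refine ⟨u, v 0, v 1, hv 0, hv 1, one_sub_v ▸ bessel.add ((hv 0).add (hv 1)), hu, huv,
    one_sub_uv ▸ bessel.add huv, ?_⟩
  rintro ⟨u₁, u₂, hu₁, huv₁, hu₂, huv₂, h⟩
  exact smul_rankOne_add_ne_add_of_isPositive_sub (hb.ne_zero 0) (hb.ne_zero 1)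
    (hb.inner_eq_zero zero_ne_one) (by norm_num) hu₁ huv₁ hu₂ huv₂ h

/-- For a complex Hilbert space `H` with `dim H > 1`, the
standard effect algebra `E(H)` is not homogeneous: there are effects
`u, v₁, v₂` with `v₁ ⊥ v₂`, `u ≤ v₁ + v₂` and `u ≤ I - (v₁ + v₂)` admitting no
decomposition `u = u₁ + u₂` with `0 ≤ u₁ ≤ v₁`, `0 ≤ u₂ ≤ v₂`. -/
theorem effects_not_homogeneous {H : Type*} [NormedAddCommGroup H]
    [InnerProductSpace ℂ H] [CompleteSpace H]
    (hdim : 1 < Module.rank ℂ H) :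
    ∃ u v₁ v₂ : H →L[ℂ] H,
      v₁.IsPositive ∧ v₂.IsPositive ∧ (1 - (v₁ + v₂)).IsPositive ∧
      u.IsPositive ∧ ((v₁ + v₂) - u).IsPositive ∧
      (1 - (u + (v₁ + v₂))).IsPositive ∧
      ¬ ∃ u₁ u₂ : H →L[ℂ] H, u₁.IsPositive ∧ (v₁ - u₁).IsPositive ∧
          u₂.IsPositive ∧ (v₂ - u₂).IsPositive ∧ u = u₁ + u₂ :=
  effects_not_homogeneous_general hdim
end
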